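/- arXiv:2310.14266 — 5 statements merged into one kernel-verified Lean document; each statement's English description precedes it below -/
import Mathlib

section
/- The semi-tensor product of matrices is associative: for matrices A ∈ F^{m×n}, B ∈ F^{p×q}, C ∈ F^{r×s} over a commutative ring F, one has (A ⋉ B) ⋉ C = A ⋉ (B ⋉ C), where both sides are matrices whose row and column index sets have equal cardinalities (by arithmetic identities among the least common multiples involved) and are identified via the standard equivalences between Fin of equal sizes. -/
open Matrix Kronecker

/-- The semi-tensor product (STP) of matrices: for `A ∈ F^{m×n}` and `B ∈ F^{p×q}` with
`t = lcm n p`, `A ⋉ B := (A ⊗ I_{t/n}) · (B ⊗ I_{t/p})`, where the product index sets of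
sizes `a` and `b` are identified with `Fin (a*b)` via the standard lexicographic
equivalence `finProdFinEquiv`. -/
noncomputable def stp {F : Type*} [CommRing F] {m n p q : ℕ}
    (A : Matrix (Fin m) (Fin n) F) (B : Matrix (Fin p) (Fin q) F) :
    Matrix (Fin (m * (Nat.lcm n p / n))) (Fin (q * (Nat.lcm n p / p))) F :=
  (Matrix.reindex finProdFinEquiv finProdFinEquiv
      (A ⊗ₖ (1 : Matrix (Fin (Nat.lcm n p / n)) (Fin (Nat.lcm n p / n)) F))) *
  (Matrix.reindex
      (finProdFinEquiv.trans (finCongr (by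
        rw [Nat.mul_div_cancel' (Nat.dvd_lcm_right n p),
          Nat.mul_div_cancel' (Nat.dvd_lcm_left n p)])))
      finProdFinEquiv
      (B ⊗ₖ (1 : Matrix (Fin (Nat.lcm n p / p)) (Fin (Nat.lcm n p / p)) F)))

/-!
Amplification `A ↦ A ⊗ I_k` is multiplicative, and iterating it multiplies the factors, so both
bracketings expand to a product `(A ⊗ I_x) (B ⊗ I_y) (C ⊗ I_z)`. Both middle factors `y` equal
`lcm (lcm n p / p) (lcm q r / q)`, the least `y` for which `n` divides the row count `p * y` and `r`
divides the column count `q * y` of `B ⊗ I_y`; the inner sizes, and with them `x` and `z`, follow.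
For zero sizes the same identities hold through `a / 0 = 0`.
-/

section Factors

theorem lcm_mul_left_eq_mul_lcm (a b c : ℕ) :
    (a * b).lcm c = a * b.lcm (a.lcm c / a) := by
  rw [← Nat.lcm_mul_left, Nat.mul_div_cancel' (Nat.dvd_lcm_left a c), ← Nat.lcm_assoc,
    Nat.lcm_eq_left (dvd_mul_right a b)]

theorem mul_lcm_mul_div_eq_lcm (a b c : ℕ) :
    b * ((a * b).lcm c / (a * b)) = b.lcm (a.lcm c / a) := by
  rcases a.eq_zero_or_pos with rfl | ha
  · simp only [zero_mul, Nat.lcm_zero_left, Nat.div_zero, mul_zero, Nat.lcm_zero_right]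
  · rw [lcm_mul_left_eq_mul_lcm, Nat.mul_div_mul_left _ _ ha,
      Nat.mul_div_cancel' (Nat.dvd_lcm_left _ _)]

variable (n p q r : ℕ)

theorem stp_middle_factor_assoc :
    n.lcm p / p * ((q * (n.lcm p / p)).lcm r / (q * (n.lcm p / p))) =
      q.lcm r / q * (n.lcm (p * (q.lcm r / q)) / (p * (q.lcm r / q))) := by
  rw [mul_lcm_mul_div_eq_lcm, n.lcm_comm (p * _), mul_lcm_mul_div_eq_lcm, n.lcm_comm p,
    Nat.lcm_comm]

theorem stp_left_inner_size_assoc :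
    n.lcm p * ((q * (n.lcm p / p)).lcm r / (q * (n.lcm p / p))) = n.lcm (p * (q.lcm r / q)) :=
  calc
    n.lcm p * ((q * (n.lcm p / p)).lcm r / (q * (n.lcm p / p)))
    _ = p * (n.lcm p / p * ((q * (n.lcm p / p)).lcm r / (q * (n.lcm p / p)))) := by
      rw [← mul_assoc p, Nat.mul_div_cancel' (Nat.dvd_lcm_right n p)]
    _ = p * (q.lcm r / q).lcm (p.lcm n / p) := by
      rw [mul_lcm_mul_div_eq_lcm, n.lcm_comm p, Nat.lcm_comm]
    _ = n.lcm (p * (q.lcm r / q)) := by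
      rw [← lcm_mul_left_eq_mul_lcm, Nat.lcm_comm]

theorem stp_right_inner_size_assoc :
    (q * (n.lcm p / p)).lcm r =
      q.lcm r * (n.lcm (p * (q.lcm r / q)) / (p * (q.lcm r / q))) := by
  simpa only [Nat.lcm_comm] using (stp_left_inner_size_assoc r q p n).symm

theorem stp_left_factor_assoc :
    n.lcm p / n * ((q * (n.lcm p / p)).lcm r / (q * (n.lcm p / p))) =
      n.lcm (p * (q.lcm r / q)) / n := by
  rw [Nat.div_mul_right_comm (Nat.dvd_lcm_left n p), stp_left_inner_size_assoc]

theorem stp_right_factor_assoc :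
    (q * (n.lcm p / p)).lcm r / r =
      q.lcm r / r * (n.lcm (p * (q.lcm r / q)) / (p * (q.lcm r / q))) := by
  rw [Nat.div_mul_right_comm (Nat.dvd_lcm_right q r), stp_right_inner_size_assoc]

end Factors

section Reindexing

theorem finProdFinEquiv_finProdFinEquiv_left {m k l : ℕ} (i : Fin m) (a : Fin k) (b : Fin l) :
    finProdFinEquiv (finProdFinEquiv (i, a), b) =
      finCongr (mul_assoc m k l).symm (finProdFinEquiv (i, finProdFinEquiv (a, b))) := by
  ext
  simp only [finProdFinEquiv_apply_val, finCongr_apply, Fin.val_cast]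
  ring

theorem reindex_mul_reindex {l m n l' m' n' R : Type*} [Fintype m] [Fintype m'] [AddCommMonoid R]
    [Mul R] (e₁ : l ≃ l') (e₂ : m ≃ m') (e₃ : n ≃ n') (A : Matrix l m R) (B : Matrix m n R) :
    reindex e₁ e₂ A * reindex e₂ e₃ B = reindex e₁ e₃ (A * B) :=
  submatrix_mul_equiv A B _ _ _

end Reindexing

/-- The amplification `A ⊗ I_k` of an `m × n` matrix `A`, with index pairs ordered
lexicographically. Its sizes `M = m * k` and `N = n * k` are parameters, so that amplifications
whose inner sizes agree only propositionally can be multiplied without casts. -/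
def amplify {R : Type*} [MulZeroOneClass R] {m n M N : ℕ} (k : ℕ) (hM : m * k = M)
    (hN : n * k = N) (A : Matrix (Fin m) (Fin n) R) : Matrix (Fin M) (Fin N) R :=
  reindex (finProdFinEquiv.trans (finCongr hM)) (finProdFinEquiv.trans (finCongr hN))
    (A ⊗ₖ (1 : Matrix (Fin k) (Fin k) R))

section Amplify

variable {R : Type*} {m n k l M N M' N' : ℕ}

theorem amplify_apply_finProdFinEquiv [MulZeroOneClass R] (A : Matrix (Fin m) (Fin n) R)
    (i : Fin m) (j : Fin n) (a b : Fin k) :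
    amplify k rfl rfl A (finProdFinEquiv (i, a)) (finProdFinEquiv (j, b)) =
      A i j * (1 : Matrix (Fin k) (Fin k) R) a b := by
  simp [amplify]

theorem reindex_amplify [MulZeroOneClass R] (A : Matrix (Fin m) (Fin n) R) (hM : m * k = M)
    (hN : n * k = N) (hkl : k = l) (hMM' : M = M') (hNN' : N = N') :
    reindex (finCongr hMM') (finCongr hNN') (amplify k hM hN A) =
      amplify l (by rw [← hkl, hM, hMM']) (by rw [← hkl, hN, hNN']) A := by
  subst hkl hMM' hNN'
  rfl

theorem amplify_mul [CommSemiring R] {q Q : ℕ} (A : Matrix (Fin m) (Fin n) R)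
    (B : Matrix (Fin n) (Fin q) R) (hM : m * k = M) (hN : n * k = N) (hQ : q * k = Q) :
    amplify k hM hQ (A * B) = amplify k hM hN A * amplify k hN hQ B := by
  simp only [amplify]
  rw [reindex_mul_reindex, ← mul_kronecker_mul, Matrix.one_mul]

theorem amplify_amplify [MulZeroOneClass R] (A : Matrix (Fin m) (Fin n) R) (hM : m * k = M)
    (hN : n * k = N) (hM' : M * l = M') (hN' : N * l = N') :
    amplify l hM' hN' (amplify k hM hN A) =
      amplify (k * l) (by rw [← mul_assoc, hM, hM']) (by rw [← mul_assoc, hN, hN']) A := by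
  subst hM hN hM' hN'
  rw [← reindex_amplify A rfl rfl rfl (mul_assoc m k l).symm (mul_assoc n k l).symm]
  ext x y
  obtain ⟨⟨u, b⟩, rfl⟩ := finProdFinEquiv.surjective x
  obtain ⟨⟨i, a⟩, rfl⟩ := finProdFinEquiv.surjective u
  obtain ⟨⟨v, b'⟩, rfl⟩ := finProdFinEquiv.surjective y
  obtain ⟨⟨j, a'⟩, rfl⟩ := finProdFinEquiv.surjective v
  rw [amplify_apply_finProdFinEquiv, amplify_apply_finProdFinEquiv,
    finProdFinEquiv_finProdFinEquiv_left, finProdFinEquiv_finProdFinEquiv_left, reindex_apply,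
    submatrix_apply, Equiv.symm_apply_apply, Equiv.symm_apply_apply, amplify_apply_finProdFinEquiv]
  simp [one_apply, ← ite_and, and_comm]

end Amplify

section SemiTensorProduct

variable {F : Type*} [CommRing F] {m n p q : ℕ}
  (A : Matrix (Fin m) (Fin n) F) (B : Matrix (Fin p) (Fin q) F)

theorem stp_eq_amplify_mul_amplify :
    stp A B =
      (amplify (n.lcm p / n) rfl (Nat.mul_div_cancel' (Nat.dvd_lcm_left n p)) A :
        Matrix (Fin (m * (n.lcm p / n))) (Fin (n.lcm p)) F) *
      (amplify (n.lcm p / p) (Nat.mul_div_cancel' (Nat.dvd_lcm_right n p)) rfl B :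
        Matrix (Fin (n.lcm p)) (Fin (q * (n.lcm p / p))) F) :=
  (reindex_mul_reindex (Equiv.refl _)
    (finCongr (Nat.mul_div_cancel' (Nat.dvd_lcm_left n p))) (Equiv.refl _) _ _).symm

theorem amplify_stp {k M N : ℕ} (hM : m * (n.lcm p / n) * k = M)
    (hN : q * (n.lcm p / p) * k = N) :
    amplify k hM hN (stp A B) =
      (amplify (n.lcm p / n * k) (by rw [← mul_assoc, hM])
        (by rw [← mul_assoc, Nat.mul_div_cancel' (Nat.dvd_lcm_left n p)]) A :
        Matrix (Fin M) (Fin (n.lcm p * k)) F) *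
      (amplify (n.lcm p / p * k)
        (by rw [← mul_assoc, Nat.mul_div_cancel' (Nat.dvd_lcm_right n p)])
        (by rw [← mul_assoc, hN]) B :
        Matrix (Fin (n.lcm p * k)) (Fin N) F) := by
  rw [stp_eq_amplify_mul_amplify, amplify_mul _ _ _ rfl, amplify_amplify, amplify_amplify]

end SemiTensorProduct

/-- The semi-tensor product is associative: `(A ⋉ B) ⋉ C = A ⋉ (B ⋉ C)`,
where the row and column index sets of the two sides have equal cardinalities (by
arithmetic identities among the least common multiples involved) and are identified via
the standard equivalences (`finCongr`) between `Fin` of equal sizes. -/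
theorem stp_assoc {F : Type*} [CommRing F] {m n p q r s : ℕ}
    (A : Matrix (Fin m) (Fin n) F) (B : Matrix (Fin p) (Fin q) F)
    (C : Matrix (Fin r) (Fin s) F) :
    ∃ (h₁ : (m * (Nat.lcm n p / n)) *
          (Nat.lcm (q * (Nat.lcm n p / p)) r / (q * (Nat.lcm n p / p))) =
        m * (Nat.lcm n (p * (Nat.lcm q r / q)) / n))
      (h₂ : s * (Nat.lcm (q * (Nat.lcm n p / p)) r / r) =
        (s * (Nat.lcm q r / r)) *
          (Nat.lcm n (p * (Nat.lcm q r / q)) / (p * (Nat.lcm q r / q)))),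
      Matrix.reindex (finCongr h₁) (finCongr h₂) (stp (stp A B) C) = stp A (stp B C) := by
  have left_factor := stp_left_factor_assoc n p q r
  have middle_factor := stp_middle_factor_assoc n p q r
  have right_factor := stp_right_factor_assoc n p q r
  refine ⟨by rw [mul_assoc, left_factor], by rw [mul_assoc, right_factor], ?_⟩
  rw [stp_eq_amplify_mul_amplify (stp A B) C, amplify_stp A B,
    stp_eq_amplify_mul_amplify A (stp B C), amplify_stp B C,
    ← reindex_mul_reindex _ (finCongr (stp_right_inner_size_assoc n p q r)),
    ← reindex_mul_reindex _ (finCongr (stp_left_inner_size_assoc n p q r)),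
    reindex_amplify A _ _ left_factor, reindex_amplify B _ _ middle_factor,
    reindex_amplify C _ _ right_factor, Matrix.mul_assoc]
end

section
/- Uniqueness of hypervector decomposition: let F be a field, r ≥ 1, n : Fin r → ℕ, and x_i, z_i : Fin n_i → F for each i. Suppose that for every tuple j ∈ Π i, Fin n_i one has ∏_i x_i(j_i) = ∏_i z_i(j_i), and that this common product function is not identically zero. Then there exist scalars k_i ∈ F, i = 1,…,r, with ∏_{i=1}^r k_i = 1 and z_i = k_i • x_i for every i. -/
/-!
Fix a tuple `j` at which the common product does not vanish, so that no factor vanishes there, and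
put `k i = z i (j i) / x i (j i)`. The product of the `k i` is the quotient of the two equal
products at `j`. Changing only the `i`-th entry of `j` changes a single factor of each product, so
comparing the two products before and after the change shows that `x i` and `z i` are proportional.
-/

section HypervectorProd

variable {ι M : Type*} {κ : ι → Type*} [Fintype ι]

/-- The hypervector (iterated Kronecker) product of the vectors `x i`, as a function of tuples of
indices. The index sets `κ i` and the number of factors are left abstract, and tuples take the place
of positions in a flattened vector. -/
def hypervectorProd [CommMonoid M] (x : ∀ i, κ i → M) (j : ∀ i, κ i) : M :=
  ∏ i, x i (j i)

theorem hypervectorProd_update_mul [CommMonoid M] [DecidableEq ι] (x : ∀ i, κ i → M)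
    (j : ∀ i, κ i) (i : ι) (a : κ i) :
    hypervectorProd x (Function.update j i a) * x i (j i) = x i a * hypervectorProd x j := by
  have split (b : κ i) : hypervectorProd x (Function.update j i b) =
      x i b * ∏ l ∈ Finset.univ \ {i}, x l (j l) := by
    simp only [hypervectorProd, Function.apply_update x,
      Finset.prod_update_of_mem (Finset.mem_univ i)]
  have split_self := split (j i)
  rw [Function.update_eq_self] at split_self
  rw [split, split_self, mul_assoc, mul_comm (x i (j i))]

theorem mul_eq_mul_of_hypervectorProd_eq [CommMonoidWithZero M] [IsCancelMulZero M]
    {x z : ∀ i, κ i → M} (h : hypervectorProd x = hypervectorProd z) {j : ∀ i, κ i}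
    (hj : hypervectorProd x j ≠ 0) (i : ι) (a : κ i) :
    z i a * x i (j i) = z i (j i) * x i a := by
  classical
  apply mul_right_cancel₀ hj
  let p := hypervectorProd x (Function.update j i a)
  have hx : p * x i (j i) = x i a * hypervectorProd x j := hypervectorProd_update_mul x j i a
  have hz : p * z i (j i) = z i a * hypervectorProd x j := by
    simpa only [p, h] using hypervectorProd_update_mul z j i a
  calc z i a * x i (j i) * hypervectorProd x j
      = p * z i (j i) * x i (j i) := by rw [hz, mul_right_comm]
    _ = z i (j i) * (p * x i (j i)) := by rw [mul_comm p, mul_assoc]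
    _ = z i (j i) * x i a * hypervectorProd x j := by rw [hx, mul_assoc]

theorem hypervector_decomposition_unique_general [CommGroupWithZero M] {x z : ∀ i, κ i → M}
    (h : hypervectorProd x = hypervectorProd z) (hne : hypervectorProd x ≠ 0) :
    ∃ k : ι → M, ∏ i, k i = 1 ∧ ∀ i, z i = k i • x i := by
  obtain ⟨j, hj⟩ : ∃ j, hypervectorProd x j ≠ 0 := Function.ne_iff.mp hne
  have hx (i : ι) : x i (j i) ≠ 0 := Finset.prod_ne_zero_iff.mp hj i (Finset.mem_univ i)
  refine ⟨fun i ↦ z i (j i) / x i (j i), ?_, fun i ↦ funext fun a ↦ ?_⟩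
  · calc ∏ i, z i (j i) / x i (j i)
        = hypervectorProd z j / hypervectorProd x j := Finset.prod_div_distrib ..
      _ = 1 := by rw [← h, div_self hj]
  · rw [Pi.smul_apply, smul_eq_mul, div_mul_eq_mul_div, eq_div_iff (hx i)]
    exact mul_eq_mul_of_hypervectorProd_eq h hj i a

end HypervectorProd

/-- Uniqueness of hypervector decomposition. Let `F` be a field, `r ≥ 1`,
`n : Fin r → ℕ`, and `x i, z i : Fin (n i) → F`. If the hypervector products coincide,
`∏ i, x i (j i) = ∏ i, z i (j i)` for every tuple `j`, and this common product function
is not identically zero, then there are scalars `k i ∈ F` with `∏ i, k i = 1` and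
`z i = k i • x i` for every `i`. -/
theorem hypervector_decomposition_unique {F : Type*} [Field F] {r : ℕ} (hr : 1 ≤ r)
    {n : Fin r → ℕ} (x z : ∀ i : Fin r, Fin (n i) → F)
    (heq : ∀ j : ∀ i, Fin (n i), ∏ i : Fin r, x i (j i) = ∏ i : Fin r, z i (j i))
    (hne : ¬ ∀ j : ∀ i, Fin (n i), ∏ i : Fin r, x i (j i) = 0) :
    ∃ k : Fin r → F, (∏ i : Fin r, k i) = 1 ∧ ∀ i : Fin r, z i = k i • x i :=
  hypervector_decomposition_unique_general (funext heq) fun h ↦ hne (congrFun h)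
end

section
/- The components of a nonzero hypervector span a uniquely determined subspace: let F be a field, r ≥ 1, and x_i, z_i : Fin n → F for i = 1,…,r (all components in F^n). Suppose that for every tuple j ∈ (Fin r → Fin n) one has ∏_i x_i(j_i) = ∏_i z_i(j_i), and that this common product function is not identically zero. Then the linear span of {x_1,…,x_r} equals the linear span of {z_1,…,z_r} as subspaces of F^n. -/
/-- The hypervector (iterated Kronecker product) with components `x i`, as a function on
multi-indices. The index type `κ i` may depend on the component. -/
def hypervector {ι M : Type*} {κ : ι → Type*} [Fintype ι] [CommMonoid M]
    (x : ∀ i, κ i → M) (j : ∀ i, κ i) : M :=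
  ∏ i, x i (j i)

section CommMonoid

variable {ι M : Type*} {κ : ι → Type*} [Fintype ι] [CommMonoid M]

theorem hypervector_update [DecidableEq ι] (x : ∀ i, κ i → M) (j : ∀ i, κ i) (k : ι) (a : κ k) :
    hypervector x (Function.update j k a) = x k a * ∏ i ∈ Finset.univ \ {k}, x i (j i) := by
  simp only [hypervector, Function.apply_update x]
  exact Finset.prod_update_of_mem (Finset.mem_univ k) _ _

theorem isUnit_prod_of_isUnit_hypervector {x : ∀ i, κ i → M} {j : ∀ i, κ i}
    (hj : IsUnit (hypervector x j)) (s : Finset ι) : IsUnit (∏ i ∈ s, x i (j i)) :=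
  IsUnit.prod_iff.mpr fun i _ => IsUnit.prod_univ_iff.mp hj i

theorem exists_units_smul_eq_of_hypervector_eq {x z : ∀ i, κ i → M}
    (heq : hypervector x = hypervector z) {j : ∀ i, κ i} (hj : IsUnit (hypervector x j)) (k : ι) :
    ∃ u : Mˣ, u • x k = z k := by
  classical
  -- Varying only the `k`-th index of `j` traces out a unit multiple of `x k`, and of `z k`.
  obtain ⟨p, hp⟩ := isUnit_prod_of_isUnit_hypervector hj (Finset.univ \ {k})
  obtain ⟨q, hq⟩ := isUnit_prod_of_isUnit_hypervector (heq ▸ hj) (Finset.univ \ {k})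
  have hslice : p • x k = q • z k := by
    funext a
    calc p * x k a = hypervector x (Function.update j k a) := by
          rw [hypervector_update, hp, mul_comm]
      _ = hypervector z (Function.update j k a) := by rw [heq]
      _ = q * z k a := by rw [hypervector_update, hq, mul_comm]
  exact ⟨q⁻¹ * p, by rw [mul_smul, hslice, inv_smul_smul]⟩

end CommMonoid

theorem span_range_eq_of_exists_units_smul_eq {ι R V : Type*} [Semiring R] [AddCommMonoid V]
    [Module R V] {v w : ι → V} (h : ∀ i, ∃ u : Rˣ, u • v i = w i) :
    Submodule.span R (Set.range v) = Submodule.span R (Set.range w) := by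
  choose u hu using h
  simp only [Submodule.span_range_eq_iSup, ← hu, Submodule.span_singleton_group_smul_eq]

theorem hypervector_span_unique_general {ι κ R : Type*} [Fintype ι] [CommSemiring R]
    {x z : ι → κ → R} (heq : hypervector x = hypervector z)
    (hunit : ∃ j, IsUnit (hypervector x j)) :
    Submodule.span R (Set.range x) = Submodule.span R (Set.range z) := by
  obtain ⟨j, hj⟩ := hunit
  exact span_range_eq_of_exists_units_smul_eq (exists_units_smul_eq_of_hypervector_eq heq hj)

/-- The components of a nonzero hypervector span a uniquely determined
subspace. Let `F` be a field, `r ≥ 1`, and `x i, z i : Fin n → F` for `i : Fin r`. If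
`∏ i, x i (j i) = ∏ i, z i (j i)` for every tuple `j : Fin r → Fin n`, and this common
product function is not identically zero, then the linear span of `{x 1, …, x r}` equals
the linear span of `{z 1, …, z r}` as subspaces of `F^n`. -/
theorem hypervector_span_unique {F : Type*} [Field F] {r n : ℕ} (hr : 1 ≤ r)
    (x z : Fin r → (Fin n → F))
    (heq : ∀ j : Fin r → Fin n, ∏ i : Fin r, x i (j i) = ∏ i : Fin r, z i (j i))
    (hne : ¬ ∀ j : Fin r → Fin n, ∏ i : Fin r, x i (j i) = 0) :
    Submodule.span F (Set.range x) = Submodule.span F (Set.range z) := by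
  exact hypervector_span_unique_general (funext heq) <|
    (not_forall.mp hne).imp fun _ hj => isUnit_iff_ne_zero.mpr hj
end

section
/- Index formula in the diagonal case: let F be a field, n ≥ 2, r ≥ 1, and z : Fin n → F a nonzero vector with e_0 ∈ {0,…,n−1} the minimal index such that z(e_0) ≠ 0. Identify each k with 0 ≤ k < n^r with its base-n digit tuple (d_1(k),…,d_r(k)). Let e be the minimal k with ∏_{i=1}^r z(d_i(k)) ≠ 0 (the index of the diagonal hypervector z^{⊗r}). Then e·(n−1) = e_0·(n^r − 1). -/
/-!
The tuples at which `z^{⊗r}` does not vanish are those all of whose entries lie in the support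
of `z`, so already in the product order there is a least one, the constant tuple `(e₀, …, e₀)`.
Reading a tuple as a base-`n` number is monotone for the product order, so the index is the number
`e₀ * (1 + n + ⋯ + n^(r-1))`.
-/

open Function

section TupleLexEquiv

variable {n r : ℕ}

/-- The position of a tuple in the lexicographic order, counted from `0`: the number whose base-`n`
digits are the entries of the tuple, the first entry being the most significant digit. The reversal
is there because `finFunctionFinEquiv` puts the least significant digit first. -/
def tupleLexEquiv (n r : ℕ) : (Fin r → Fin n) ≃ Fin (n ^ r) :=
  (Fin.revPerm.arrowCongr (Equiv.refl (Fin n))).trans finFunctionFinEquiv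

theorem coe_tupleLexEquiv (d : Fin r → Fin n) :
    (tupleLexEquiv n r d : ℕ) = ∑ i : Fin r, (d i.rev : ℕ) * n ^ (i : ℕ) :=
  rfl

theorem coe_tupleLexEquiv_symm (k : Fin (n ^ r)) (i : Fin r) :
    ((tupleLexEquiv n r).symm k i : ℕ) = k / n ^ (r - 1 - (i : ℕ)) % n := by
  rw [Nat.sub_sub, Nat.add_comm 1, ← Fin.val_rev]
  rfl

theorem tupleLexEquiv_monotone : Monotone (tupleLexEquiv n r) := by
  intro d d' h
  rw [Fin.le_def, coe_tupleLexEquiv, coe_tupleLexEquiv]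
  exact Finset.sum_le_sum fun i _ ↦ Nat.mul_le_mul_right _ (h i.rev)

theorem image_coe_tupleLexEquiv (hn : 0 < n) (s : Set (Fin r → Fin n)) :
    (fun d ↦ (tupleLexEquiv n r d : ℕ)) '' s =
      {k | k < n ^ r ∧ (fun i : Fin r ↦ ⟨k / n ^ (r - 1 - (i : ℕ)) % n, Nat.mod_lt _ hn⟩) ∈ s} := by
  have symm_eq (k : Fin (n ^ r)) : (tupleLexEquiv n r).symm k =
      fun i : Fin r ↦ ⟨k / n ^ (r - 1 - (i : ℕ)) % n, Nat.mod_lt _ hn⟩ :=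
    funext fun i ↦ Fin.ext (coe_tupleLexEquiv_symm k i)
  ext k
  constructor
  · rintro ⟨d, hd, rfl⟩
    refine ⟨(tupleLexEquiv n r d).isLt, ?_⟩
    rwa [← symm_eq, Equiv.symm_apply_apply]
  · rintro ⟨hk, hd⟩
    rw [← symm_eq ⟨k, hk⟩] at hd
    exact ⟨_, hd, congrArg Fin.val (Equiv.apply_symm_apply _ _)⟩

theorem coe_tupleLexEquiv_const_mul_sub_one (a : Fin n) :
    (tupleLexEquiv n r (fun _ ↦ a) : ℕ) * (n - 1) = a * (n ^ r - 1) := by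
  rw [coe_tupleLexEquiv, ← Finset.mul_sum, Fin.sum_univ_eq_sum_range (n ^ ·), mul_assoc,
    geom_sum_mul_of_one_le a.pos]

end TupleLexEquiv

section DiagonalHypervector

variable {ι M₀ : Type*} [CommMonoidWithZero M₀]

/-- The diagonal hypervector `z^{⊗r}`, as a function on tuples of indices. -/
def diagonalHypervector (z : ι → M₀) (r : ℕ) (j : Fin r → ι) : M₀ :=
  ∏ i, z (j i)

theorem isLeast_support_diagonalHypervector [NoZeroDivisors M₀] [Preorder ι] {z : ι → M₀} {a : ι}
    (ha : IsLeast (support z) a) (r : ℕ) :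
    IsLeast (support (diagonalHypervector z r)) fun _ ↦ a := by
  have : Nontrivial M₀ := nontrivial_of_ne _ _ ha.1
  constructor
  · exact Finset.prod_ne_zero_iff.2 fun _ _ ↦ ha.1
  · exact fun j hj i ↦ ha.2 (Finset.prod_ne_zero_iff.1 hj i (Finset.mem_univ i))

end DiagonalHypervector

theorem diagonal_hypervector_index_general {M₀ : Type*} [CommMonoidWithZero M₀] [NoZeroDivisors M₀]
    {n r : ℕ} {z : Fin n → M₀} {e₀ : Fin n} (he₀ : IsLeast (support z) e₀) {e : ℕ}
    (he : IsLeast {k : ℕ | k < n ^ r ∧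
        (∏ i : Fin r, z ⟨k / n ^ (r - 1 - (i : ℕ)) % n, Nat.mod_lt _ e₀.pos⟩) ≠ 0} e) :
    e * (n - 1) = e₀ * (n ^ r - 1) := by
  have least := (Fin.val_strictMono.monotone.comp tupleLexEquiv_monotone).map_isLeast
    (isLeast_support_diagonalHypervector he₀ r)
  have index_eq : e = tupleLexEquiv n r fun _ ↦ e₀ := by
    refine he.unique ?_
    rwa [comp_def, image_coe_tupleLexEquiv e₀.pos] at least
  rw [index_eq, coe_tupleLexEquiv_const_mul_sub_one]

/-- Index formula in the diagonal case. Let `F` be a field, `n ≥ 2`,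
`r ≥ 1`, and `z : Fin n → F` a nonzero vector whose minimal nonzero index is `e₀ < n`.
Identifying each `k` with `0 ≤ k < n^r` with its base-`n` digit tuple
`d_i(k) = k / n^(r-1-i) % n` (most significant first), let `e` be the minimal `k < n^r`
with `∏ i, z (d_i k) ≠ 0` (the index of the diagonal hypervector `z^{⊗r}`). Then
`e·(n−1) = e₀·(n^r − 1)` (the paper's 1-based form `(e−1)(n−1) = (e₀−1)(n^r−1)`). -/
theorem diagonal_hypervector_index {F : Type*} [Field F] {n r : ℕ}
    (hn : 2 ≤ n) (hr : 1 ≤ r) (z : Fin n → F) (e₀ : ℕ)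
    (he₀ : e₀ < n)
    (hz : z ⟨e₀, he₀⟩ ≠ 0)
    (hmin : ∀ t : Fin n, z t ≠ 0 → e₀ ≤ (t : ℕ))
    (e : ℕ)
    (he : IsLeast {k : ℕ | k < n ^ r ∧
        (∏ i : Fin r, z ⟨k / n ^ (r - 1 - (i : ℕ)) % n, Nat.mod_lt _ (by omega)⟩) ≠ 0} e) :
    e * (n - 1) = e₀ * (n ^ r - 1) :=
  diagonal_hypervector_index_general (e₀ := ⟨e₀, he₀⟩) ⟨hz, hmin⟩ he
end

section
/- Reduction of the U-eigenequation to a general matrix eigenequation: let F be a commutative ring, n, N, s ≥ 1, B_j ∈ F^{n×N} for j = 1,…,s, and x : Fin N → F. Define B̃ as the matrix with row index set (Fin s → Fin n) and column index set (Fin s → Fin N) given by B̃(t, l) = ∏_{j=1}^s B_j(t_j, l_j), and define x^{⊗s} : (Fin s → Fin N) → F by x^{⊗s}(l) = ∏_{j=1}^s x(l_j). Then the function t ↦ ∏_{j=1}^s (B_j · x)(t_j) equals B̃ · x^{⊗s}; consequently, for any matrix A with row index set (Fin s → Fin n) and column index Fin N and any λ ∈ F, the U-eigenequation A·x = λ •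 (⋉_{j=1}^s B_j x) holds if and only if A·x = λ • (B̃ · x^{⊗s}). -/
open Matrix

section PiKronecker

variable {ι R : Type*} [Fintype ι] {m n : ι → Type*}

/-- The Kronecker product of a finite family of matrices (`B̃` in the paper), converting a
type-based multilinear map into a single matrix. Its rows and columns are indexed by tuples rather
than by a linear ordering of them. -/
def piKronecker [CommMonoid R] (B : ∀ j, Matrix (m j) (n j) R) :
    Matrix (∀ j, m j) (∀ j, n j) R :=
  of fun t l ↦ ∏ j, B j (t j) (l j)

/-- The tensor product of a finite family of vectors, in coordinates indexed by tuples. It encodes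
both the semi-tensor product `⋉_j v j` and, for a constant family, the tensor power `x^{⊗s}`. -/
def piTensorVec [CommMonoid R] (v : ∀ j, n j → R) : (∀ j, n j) → R :=
  fun l ↦ ∏ j, v j (l j)

theorem piKronecker_mulVec_piTensorVec [CommSemiring R] [DecidableEq ι] [∀ j, Fintype (n j)]
    (B : ∀ j, Matrix (m j) (n j) R) (v : ∀ j, n j → R) :
    piKronecker B *ᵥ piTensorVec v = piTensorVec fun j ↦ B j *ᵥ v j := by
  ext t
  calc (piKronecker B *ᵥ piTensorVec v) t
      = ∑ l : ∀ j, n j, (∏ j, B j (t j) (l j)) * ∏ j, v j (l j) := rfl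
    _ = ∑ l : ∀ j, n j, ∏ j, B j (t j) (l j) * v j (l j) := by
      simp only [Finset.prod_mul_distrib]
    _ = ∏ j, ∑ k, B j (t j) k * v j k :=
      (Fintype.prod_sum fun j k ↦ B j (t j) k * v j k).symm
    _ = piTensorVec (fun j ↦ B j *ᵥ v j) t := rfl

end PiKronecker

theorem u_eigen_reduction_general {ι κ R : Type*} [Fintype ι] [DecidableEq ι] [Fintype κ]
    [CommSemiring R] {m : ι → Type*} (B : ∀ j, Matrix (m j) κ R) (x : κ → R) :
    (piTensorVec fun j ↦ B j *ᵥ x) = piKronecker B *ᵥ piTensorVec (fun _ ↦ x) ∧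
    ∀ (A : Matrix (∀ j, m j) κ R) (lam : R),
      A *ᵥ x = lam • piTensorVec (fun j ↦ B j *ᵥ x) ↔
        A *ᵥ x = lam • piKronecker B *ᵥ piTensorVec (fun _ ↦ x) := by
  have mulVec_power := piKronecker_mulVec_piTensorVec B fun _ ↦ x
  exact ⟨mulVec_power.symm, fun A lam ↦ by rw [mulVec_power]⟩

/-- Reduction of the U-eigenequation to a general matrix eigenequation.
Let `F` be a commutative ring, `n, N, s ≥ 1`, `B j ∈ F^{n×N}`, and `x : Fin N → F`.
With `B̃ (t, l) = ∏ j, B j (t j) (l j)` (rows indexed by `Fin s → Fin n`, columns by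
`Fin s → Fin N`) and `x^{⊗s} (l) = ∏ j, x (l j)`, the function
`t ↦ ∏ j, (B j · x) (t j)` equals `B̃ · x^{⊗s}`; consequently, for any matrix `A` (rows
`Fin s → Fin n`, columns `Fin N`) and any `λ ∈ F`, the U-eigenequation
`A·x = λ • (⋉_j B_j x)` holds iff `A·x = λ • (B̃ · x^{⊗s})`. -/
theorem u_eigen_reduction {F : Type*} [CommRing F] {n N s : ℕ}
    (hn : 1 ≤ n) (hN : 1 ≤ N) (hs : 1 ≤ s)
    (B : Fin s → Matrix (Fin n) (Fin N) F) (x : Fin N → F) :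
    ((fun t : Fin s → Fin n => ∏ j : Fin s, (B j).mulVec x (t j)) =
      (Matrix.of (fun (t : Fin s → Fin n) (l : Fin s → Fin N) =>
          ∏ j : Fin s, B j (t j) (l j))).mulVec
        (fun l : Fin s → Fin N => ∏ j : Fin s, x (l j))) ∧
    ∀ (A : Matrix (Fin s → Fin n) (Fin N) F) (lam : F),
      (A.mulVec x = lam • fun t : Fin s → Fin n => ∏ j : Fin s, (B j).mulVec x (t j)) ↔
      A.mulVec x = lam •
        (Matrix.of (fun (t : Fin s → Fin n) (l : Fin s → Fin N) =>
            ∏ j : Fin s, B j (t j) (l j))).mulVec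
          (fun l : Fin s → Fin N => ∏ j : Fin s, x (l j)) :=
  u_eigen_reduction_general B x
end
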